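/- Let ξ: ℝ^d → ℝ^d be Lipschitz and bounded, and u: ℝ^d → ℝ bounded measurable. Then the commutator of multiplication by ξ with convolution by ∇G_h satisfies the uniform estimate ‖ξ·(∇G_h∗u) − ∇G_h∗(ξ u)‖_∞ ≤ C ‖∇ξ‖_∞ ‖u‖_∞, with C depending only on the dimension d (in particular independent of h). -/

import Mathlib

/-!
If `ξ` is `K`-Lipschitz and `|u| ≤ M`, then `‖ξ x - ξ (x - z)‖ ≤ K ‖z‖` bounds the commutator by
`K M ∫ ‖z‖ ‖∇G_h(z)‖ dz`. As `‖∇G_h(z)‖ = G_h(z) ‖z‖ / h`, this last integral is the second moment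
`d h` of `G_h` divided by `h`, that is, `d`. In polar coordinates the value of the second moment is
an instance of the recursion `Γ(t + 1) = t Γ(t)` at `t = d / 2`.
-/

open Real MeasureTheory
open scoped RealInnerProductSpace

/-- The centered Gaussian kernel of variance `h` on `ℝ^d`. -/
noncomputable def gauss (d : ℕ) (h : ℝ) (z : EuclideanSpace ℝ (Fin d)) : ℝ :=
  (2 * π * h) ^ (-(d : ℝ) / 2) * Real.exp (-‖z‖ ^ 2 / (2 * h))

/-- The gradient `∇G_h(z) = -(G_h(z)/h) z` of the Gaussian kernel. -/
noncomputable def gradGauss (d : ℕ) (h : ℝ) (z : EuclideanSpace ℝ (Fin d)) :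
    EuclideanSpace ℝ (Fin d) :=
  (-(gauss d h z) / h) • z

section RadialGaussianMoments

open Set Module

theorem integral_rpow_add_two_mul_exp_neg_mul_sq {b s : ℝ} (hb : 0 < b) (hs : -1 < s) :
    ∫ y in Ioi (0 : ℝ), y ^ (s + 2) * exp (-b * y ^ 2) =
      (s + 1) / (2 * b) * ∫ y in Ioi (0 : ℝ), y ^ s * exp (-b * y ^ 2) := by
  have moment {q : ℝ} (hq : -1 < q) := integral_rpow_mul_exp_neg_mul_rpow two_pos hq hb
  simp only [rpow_two] at moment
  have ht : (s + 1) / 2 ≠ 0 := by linarith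
  rw [moment hs, moment (by linarith), show (s + 2 + 1) / 2 = (s + 1) / 2 + 1 by ring,
    show -(s + 2 + 1) / 2 = -(s + 1) / 2 - 1 by ring, Gamma_add_one ht, rpow_sub_one hb.ne']
  field_simp

variable {E : Type*} [NormedAddCommGroup E] [NormedSpace ℝ E] [FiniteDimensional ℝ E]
  [MeasurableSpace E] [BorelSpace E] (μ : Measure E) [μ.IsAddHaarMeasure] {b : ℝ}

theorem integrable_norm_sq_mul_exp_neg_mul_norm_sq (hb : 0 < b) :
    Integrable (fun x : E ↦ ‖x‖ ^ 2 * exp (-b * ‖x‖ ^ 2)) μ := by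
  rcases subsingleton_or_nontrivial E with _ | _
  · simp [Subsingleton.elim _ (0 : E)]
  · refine (integrable_fun_norm_addHaar μ (f := fun y ↦ y ^ 2 * exp (-b * y ^ 2))).2 ?_
    have hs : (-1 : ℝ) < (finrank ℝ E - 1 + 2 : ℕ) :=
      neg_one_lt_zero.trans_le (Nat.cast_nonneg _)
    refine (integrable_rpow_mul_exp_neg_mul_sq hb hs).integrableOn.congr_fun (fun y _ ↦ ?_)
      measurableSet_Ioi
    simp only [rpow_natCast, smul_eq_mul, pow_add, mul_assoc]

theorem integral_norm_sq_mul_exp_neg_mul_norm_sq (hb : 0 < b) :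
    ∫ x, ‖x‖ ^ 2 * exp (-b * ‖x‖ ^ 2) ∂μ =
      finrank ℝ E / (2 * b) * ∫ x, exp (-b * ‖x‖ ^ 2) ∂μ := by
  rcases subsingleton_or_nontrivial E with _ | _
  · simp [Subsingleton.elim _ (0 : E), finrank_zero_of_subsingleton]
  · have radial : ∫ y in Ioi (0 : ℝ), y ^ (finrank ℝ E - 1 + 2) * exp (-b * y ^ 2) =
        finrank ℝ E / (2 * b) * ∫ y in Ioi (0 : ℝ), y ^ (finrank ℝ E - 1) * exp (-b * y ^ 2) := by
      have recursion := integral_rpow_add_two_mul_exp_neg_mul_sq hb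
        (neg_one_lt_zero.trans_le (Nat.cast_nonneg (finrank ℝ E - 1)))
      norm_cast at recursion
      rwa [Nat.sub_add_cancel finrank_pos] at recursion
    rw [integral_fun_norm_addHaar μ (fun y ↦ y ^ 2 * exp (-b * y ^ 2)),
      integral_fun_norm_addHaar μ (fun y ↦ exp (-b * y ^ 2))]
    simp only [smul_eq_mul, nsmul_eq_mul, ← mul_assoc, ← pow_add]
    rw [radial]
    ring

end RadialGaussianMoments

section GaussianKernel

variable {d : ℕ} {h : ℝ}

theorem gauss_nonneg (hh : 0 ≤ h) (z : EuclideanSpace ℝ (Fin d)) : 0 ≤ gauss d h z := by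
  unfold gauss
  positivity

theorem gauss_eq_const_mul_exp_neg_mul (z : EuclideanSpace ℝ (Fin d)) :
    gauss d h z = (2 * π * h) ^ (-(d : ℝ) / 2) * exp (-(2 * h)⁻¹ * ‖z‖ ^ 2) := by
  rw [gauss, show -‖z‖ ^ 2 / (2 * h) = -(2 * h)⁻¹ * ‖z‖ ^ 2 by ring]

theorem integral_gauss (hh : 0 < h) : ∫ z, gauss d h z = 1 := by
  simp_rw [gauss_eq_const_mul_exp_neg_mul]
  rw [integral_const_mul, GaussianFourier.integral_rexp_neg_mul_sq_norm (by positivity),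
    finrank_euclideanSpace_fin, div_inv_eq_mul, neg_div, rpow_neg (by positivity),
    show π * (2 * h) = 2 * π * h by ring, inv_mul_cancel₀ (by positivity)]

theorem integrable_norm_sq_mul_gauss (hh : 0 < h) :
    Integrable (fun z ↦ ‖z‖ ^ 2 * gauss d h z) := by
  simp_rw [gauss_eq_const_mul_exp_neg_mul, mul_left_comm]
  exact (integrable_norm_sq_mul_exp_neg_mul_norm_sq volume (by positivity)).const_mul _

theorem integral_norm_sq_mul_gauss (hh : 0 < h) : ∫ z, ‖z‖ ^ 2 * gauss d h z = d * h := by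
  calc ∫ z, ‖z‖ ^ 2 * gauss d h z
      = d * h * ∫ z, gauss d h z := by
        simp_rw [gauss_eq_const_mul_exp_neg_mul, mul_left_comm]
        rw [integral_const_mul, integral_const_mul,
          integral_norm_sq_mul_exp_neg_mul_norm_sq volume (by positivity),
          finrank_euclideanSpace_fin]
        field_simp
    _ = d * h := by rw [integral_gauss hh, mul_one]

theorem continuous_gradGauss : Continuous (gradGauss d h) := by
  unfold gradGauss gauss
  fun_prop

theorem norm_mul_norm_gradGauss (hh : 0 ≤ h) (z : EuclideanSpace ℝ (Fin d)) :
    ‖z‖ * ‖gradGauss d h z‖ = ‖z‖ ^ 2 * gauss d h z / h := by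
  rw [gradGauss, norm_smul, norm_div, norm_neg, norm_of_nonneg (gauss_nonneg hh z),
    norm_of_nonneg hh]
  ring

theorem integrable_norm_mul_norm_gradGauss (hh : 0 < h) :
    Integrable (fun z ↦ ‖z‖ * ‖gradGauss d h z‖) := by
  simpa only [norm_mul_norm_gradGauss hh.le] using (integrable_norm_sq_mul_gauss hh).div_const h

theorem integral_norm_mul_norm_gradGauss (hh : 0 < h) :
    ∫ z, ‖z‖ * ‖gradGauss d h z‖ = d := by
  simp_rw [norm_mul_norm_gradGauss hh.le]
  rw [integral_div, integral_norm_sq_mul_gauss hh, mul_div_cancel_right₀ _ hh.ne']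

end GaussianKernel

section Commutator

variable {E F G : Type*} [NormedAddCommGroup E] [NormedAddCommGroup F] [InnerProductSpace ℝ F]
  [NormedAddCommGroup G] [NormedSpace ℝ G]
  {ξ k : E → F} {K : NNReal} {u : E → G} {M : ℝ}

theorem norm_inner_sub_smul_le (hξ : LipschitzWith K ξ) (x z : E)
    (hu : ‖u (x - z)‖ ≤ M) :
    ‖⟪ξ x - ξ (x - z), k z⟫ • u (x - z)‖ ≤ K * M * (‖z‖ * ‖k z‖) := by
  have hincr : ‖ξ x - ξ (x - z)‖ ≤ K * ‖z‖ := by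
    simpa only [sub_sub_cancel] using hξ.norm_sub_le x (x - z)
  calc ‖⟪ξ x - ξ (x - z), k z⟫ • u (x - z)‖
      ≤ ‖ξ x - ξ (x - z)‖ * ‖k z‖ * ‖u (x - z)‖ := by
        rw [norm_smul]
        gcongr
        exact norm_inner_le_norm _ _
    _ ≤ K * ‖z‖ * ‖k z‖ * M := by gcongr
    _ = K * M * (‖z‖ * ‖k z‖) := by ring

variable [MeasurableSpace E] [BorelSpace E] [SecondCountableTopology E]
  {μ : Measure E} [SFinite μ] [μ.IsAddLeftInvariant]

theorem ae_norm_inner_sub_smul_le (hξ : LipschitzWith K ξ) (hM : ∀ᵐ y ∂μ, ‖u y‖ ≤ M) (x : E) :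
    ∀ᵐ z ∂μ, ‖⟪ξ x - ξ (x - z), k z⟫ • u (x - z)‖ ≤ K * M * (‖z‖ * ‖k z‖) :=
  ((quasiMeasurePreserving_sub_left μ x).ae hM).mono fun z hz ↦
    norm_inner_sub_smul_le hξ x z hz

theorem integrable_inner_sub_smul (hξ : LipschitzWith K ξ) (hk : AEStronglyMeasurable k μ)
    (hkint : Integrable (fun z ↦ ‖z‖ * ‖k z‖) μ) (hu : AEStronglyMeasurable u μ)
    (hM : ∀ᵐ y ∂μ, ‖u y‖ ≤ M) (x : E) :
    Integrable (fun z ↦ ⟪ξ x - ξ (x - z), k z⟫ • u (x - z)) μ := by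
  have hincr : Continuous fun z ↦ ξ x - ξ (x - z) := by
    have := hξ.continuous
    fun_prop
  exact (hkint.const_mul _).mono'
    ((hincr.aestronglyMeasurable.inner hk).smul
      (hu.comp_quasiMeasurePreserving (quasiMeasurePreserving_sub_left μ x)))
    (ae_norm_inner_sub_smul_le hξ hM x)

theorem norm_integral_inner_sub_smul_le (hξ : LipschitzWith K ξ)
    (hkint : Integrable (fun z ↦ ‖z‖ * ‖k z‖) μ) (hM : ∀ᵐ y ∂μ, ‖u y‖ ≤ M) (x : E) :
    ‖∫ z, ⟪ξ x - ξ (x - z), k z⟫ • u (x - z) ∂μ‖ ≤ K * M * ∫ z, ‖z‖ * ‖k z‖ ∂μ := by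
  rw [← integral_const_mul]
  exact norm_integral_le_of_norm_le (hkint.const_mul _) (ae_norm_inner_sub_smul_le hξ hM x)

end Commutator

theorem stmt8_general {d : ℕ} {h : ℝ} (hh : 0 < h)
    {ξ : EuclideanSpace ℝ (Fin d) → EuclideanSpace ℝ (Fin d)} {K : NNReal}
    (hξ : LipschitzWith K ξ) {G : Type*} [NormedAddCommGroup G] [NormedSpace ℝ G]
    {u : EuclideanSpace ℝ (Fin d) → G} (hu : AEStronglyMeasurable u)
    {M : ℝ} (hM : ∀ᵐ y, ‖u y‖ ≤ M) (x : EuclideanSpace ℝ (Fin d)) :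
    Integrable (fun z ↦ ⟪ξ x - ξ (x - z), gradGauss d h z⟫ • u (x - z)) ∧
      ‖∫ z, ⟪ξ x - ξ (x - z), gradGauss d h z⟫ • u (x - z)‖ ≤ d * K * M := by
  have hint := integrable_norm_mul_norm_gradGauss (d := d) hh
  refine ⟨integrable_inner_sub_smul hξ continuous_gradGauss.aestronglyMeasurable hint hu hM x, ?_⟩
  calc ‖∫ z, ⟪ξ x - ξ (x - z), gradGauss d h z⟫ • u (x - z)‖
      ≤ K * M * ∫ z, ‖z‖ * ‖gradGauss d h z‖ := norm_integral_inner_sub_smul_le hξ hint hM x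
    _ = d * K * M := by rw [integral_norm_mul_norm_gradGauss hh]; ring

/-- Uniform-in-`h` commutator estimate: for Lipschitz bounded
`ξ : ℝ^d → ℝ^d` and bounded measurable `u`,
`‖[ξ·, ∇G_h∗]u‖_∞ = ‖ξ·(∇G_h∗u) − ∇G_h∗(ξu)‖_∞ ≤ C‖∇ξ‖_∞‖u‖_∞`
with `C = C(d)` independent of `h`. -/
theorem stmt8 (d : ℕ) :
    ∃ C : ℝ, 0 < C ∧ ∀ (h : ℝ), 0 < h →
      ∀ (ξ : EuclideanSpace ℝ (Fin d) → EuclideanSpace ℝ (Fin d)) (K : NNReal),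
        LipschitzWith K ξ → ∀ B : ℝ, (∀ x, ‖ξ x‖ ≤ B) →
      ∀ (u : EuclideanSpace ℝ (Fin d) → ℝ), Measurable u →
      ∀ M : ℝ, 0 ≤ M → (∀ x, |u x| ≤ M) →
      ∀ x, |∫ z, ⟪ξ x - ξ (x - z), gradGauss d h z⟫ * u (x - z)| ≤ C * K * M := by
  -- `d + 1` rather than `d`, because `C` has to be positive also for `d = 0`.
  refine ⟨d + 1, by positivity, fun h hh ξ K hξ _ _ u hu M hM0 hM x ↦ ?_⟩
  exact (stmt8_general hh hξ hu.aestronglyMeasurable (.of_forall hM) x).2.trans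
    (by gcongr; exact (lt_add_one _).le)
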